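/- Let G ≠ 0, ‖H‖ ≤ K_H with K_H > 0, and let η^C := -α G where α ≥ 0 is a global minimizer of t ↦ m(-t G) over t ≥ 0. Then -m(η^C) ≥ max{ (1/12)‖η^C‖² (√(K_H² + 4σ‖G‖) - K_H), (‖G‖/(2√3)) · min{ ‖G‖/K_H, √(‖G‖/σ) } }. (Inequality (2) of Lemma 3.1, the Cauchy-point decrease bound.) -/

import Mathlib

open RealInnerProductSpace

/-!
Write `g = ‖G‖` and let `c` be the Rayleigh quotient of `H` at `G`. In the arc length `s = t * g`,
the model along the ray `-t G` is the cubic `φ s = -g s + (c / 2) s² + (σ / 3) s³`. At a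
minimizer `s > 0`, stationarity gives `g = s (c + σ s)`, hence
`-φ s = s² (c / 2 + (2 / 3) σ s) ≥ (σ / 6) s³`, because `c + σ s ≥ 0`. With `c ≤ K` it also gives
`g ≤ s (K + σ s)`, hence `√(K² + 4 σ g) - K ≤ 2 σ s`; the two estimates combine to the
first bound. The second one comes from comparing `φ s` with the value of `φ` at half of
`min (g / K) √(g / σ)`.
-/

section RadialCubic

/-- The cubic model along a ray, as a function of the arc length `s`: the initial slope is `-g` and
the quadratic part has curvature `c`. -/
noncomputable def radialCubic (g c σ s : ℝ) : ℝ := -g * s + c / 2 * s ^ 2 + σ / 3 * s ^ 3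

variable {g c σ s K : ℝ}

lemma hasDerivAt_radialCubic (g c σ s : ℝ) :
    HasDerivAt (radialCubic g c σ) (-g + c * s + σ * s ^ 2) s := by
  have linear := (hasDerivAt_id s).const_mul (-g)
  have quadratic := (hasDerivAt_pow 2 s).const_mul (c / 2)
  have cubic := (hasDerivAt_pow 3 s).const_mul (σ / 3)
  exact ((linear.add quadratic).add cubic).congr_deriv (by push_cast; ring)

lemma mul_add_eq_of_isMinOn_radialCubic (hs : 0 < s)
    (hmin : IsMinOn (radialCubic g c σ) (Set.Ici 0) s) : s * (c + σ * s) = g := by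
  have stationary := (hmin.isLocalMin (Ici_mem_nhds hs)).hasDerivAt_eq_zero
    (hasDerivAt_radialCubic g c σ s)
  linarith

lemma cube_le_neg_radialCubic_of_isMinOn (hg : 0 ≤ g) (hs : 0 ≤ s)
    (hmin : IsMinOn (radialCubic g c σ) (Set.Ici 0) s) :
    σ / 6 * s ^ 3 ≤ -radialCubic g c σ s := by
  obtain rfl | hs := hs.eq_or_lt
  · simp [radialCubic]
  have hgs := mul_add_eq_of_isMinOn_radialCubic hs hmin
  have hcσ : 0 ≤ c + σ * s := nonneg_of_mul_nonneg_right (hgs ▸ hg) hs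
  calc σ / 6 * s ^ 3 ≤ σ / 6 * s ^ 3 + s ^ 2 / 2 * (c + σ * s) :=
        le_add_of_nonneg_right (by positivity)
    _ = -radialCubic g c σ s := by rw [radialCubic, ← hgs]; ring

lemma sqrt_sq_add_le (hσ : 0 ≤ σ) (hKs : 0 ≤ K + 2 * σ * s) (hg : g ≤ s * (K + σ * s)) :
    √(K ^ 2 + 4 * σ * g) ≤ K + 2 * σ * s :=
  Real.sqrt_le_iff.2 ⟨hKs, calc
    K ^ 2 + 4 * σ * g ≤ K ^ 2 + 4 * σ * (s * (K + σ * s)) := by gcongr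
    _ = (K + 2 * σ * s) ^ 2 := by ring⟩

lemma sq_mul_sqrt_sub_le_neg_radialCubic (hg : 0 ≤ g) (hK : 0 ≤ K) (hc : c ≤ K) (hσ : 0 ≤ σ)
    (hs : 0 ≤ s) (hmin : IsMinOn (radialCubic g c σ) (Set.Ici 0) s) :
    1 / 12 * s ^ 2 * (√(K ^ 2 + 4 * σ * g) - K) ≤ -radialCubic g c σ s := by
  obtain rfl | hs := hs.eq_or_lt
  · simp [radialCubic]
  have hgK : g ≤ s * (K + σ * s) := by
    rw [← mul_add_eq_of_isMinOn_radialCubic hs hmin]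
    gcongr
  calc 1 / 12 * s ^ 2 * (√(K ^ 2 + 4 * σ * g) - K) ≤ 1 / 12 * s ^ 2 * (2 * σ * s) := by
        gcongr
        linarith [sqrt_sq_add_le hσ (by positivity) hgK]
    _ = σ / 6 * s ^ 3 := by ring
    _ ≤ -radialCubic g c σ s := cube_le_neg_radialCubic_of_isMinOn hg hs.le hmin

lemma third_mul_le_neg_radialCubic_half (hs : 0 ≤ s) (hcs : c * s ≤ g) (hσs : σ * s ^ 2 ≤ g) :
    g / 3 * s ≤ -radialCubic g c σ (s / 2) := by
  have hquad : c * s * s ≤ g * s := by gcongr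
  have hcube : σ * s ^ 2 * s ≤ g * s := by gcongr
  rw [radialCubic]
  linarith

lemma third_mul_min_le_neg_radialCubic (hg : 0 ≤ g) (hK : 0 < K) (hc : c ≤ K) (hσ : 0 < σ)
    (hmin : IsMinOn (radialCubic g c σ) (Set.Ici 0) s) :
    g / 3 * min (g / K) √(g / σ) ≤ -radialCubic g c σ s := by
  set r := min (g / K) √(g / σ)
  have hr : 0 ≤ r := by positivity
  have hcr : c * r ≤ g := calc
    c * r ≤ K * (g / K) := by gcongr; exact min_le_left _ _
    _ = g := mul_div_cancel₀ g hK.ne'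
  have hσr : σ * r ^ 2 ≤ g := calc
    σ * r ^ 2 ≤ σ * √(g / σ) ^ 2 := by gcongr; exact min_le_right _ _
    _ = g := by rw [Real.sq_sqrt (by positivity), mul_div_cancel₀ g hσ.ne']
  calc g / 3 * r ≤ -radialCubic g c σ (r / 2) := third_mul_le_neg_radialCubic_half hr hcr hσr
    _ ≤ -radialCubic g c σ s := neg_le_neg (hmin (Set.mem_Ici.2 (by positivity)))

end RadialCubic

section CubicModel

variable {E : Type*} [NormedAddCommGroup E] [InnerProductSpace ℝ E]

/-- The cubic-regularized model with gradient `G`, Hessian `H` and regularization parameter `σ`. -/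
noncomputable def cubicModel (G : E) (H : E →L[ℝ] E) (σ : ℝ) (ξ : E) : ℝ :=
  ⟪G, ξ⟫ + (1 / 2) * ⟪H ξ, ξ⟫ + (σ / 3) * ‖ξ‖ ^ 3

lemma cubicModel_neg_smul (G : E) (H : E →L[ℝ] E) (σ : ℝ) {t : ℝ} (ht : 0 ≤ t) :
    cubicModel G H σ (-(t • G)) = radialCubic ‖G‖ (H.rayleighQuotient G) σ (t * ‖G‖) := by
  have hcurv : ⟪H G, G⟫ = H.rayleighQuotient G * ‖G‖ ^ 2 := by
    obtain rfl | hG := eq_or_ne G 0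
    · simp
    · exact (div_mul_cancel₀ _ (by positivity)).symm
  rw [cubicModel, radialCubic, norm_neg, norm_smul_of_nonneg ht]
  simp only [map_neg, map_smul, inner_neg_left, inner_neg_right, real_inner_smul_left,
    real_inner_smul_right, real_inner_self_eq_norm_sq, hcurv]
  ring

lemma isMinOn_radialCubic_of_isMinOn_cubicModel {G : E} (hG : G ≠ 0) {H : E →L[ℝ] E} {σ α : ℝ}
    (hα : 0 ≤ α) (hmin : IsMinOn (fun t : ℝ ↦ cubicModel G H σ (-(t • G))) (Set.Ici 0) α) :
    IsMinOn (radialCubic ‖G‖ (H.rayleighQuotient G) σ) (Set.Ici 0) (α * ‖G‖) := by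
  refine isMinOn_iff.2 fun s (hs : 0 ≤ s) ↦ ?_
  have ht : 0 ≤ s / ‖G‖ := by positivity
  have hle : cubicModel G H σ (-(α • G)) ≤ cubicModel G H σ (-((s / ‖G‖) • G)) := hmin ht
  rwa [cubicModel_neg_smul G H σ hα, cubicModel_neg_smul G H σ ht,
    div_mul_cancel₀ s (norm_ne_zero_iff.2 hG)] at hle

theorem cauchy_point_decrease_general {G : E} {H : E →L[ℝ] E} {K σ α : ℝ} (hK : 0 < K)
    (hHK : H.rayleighQuotient G ≤ K) (hσ : 0 < σ) (hα : 0 ≤ α)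
    (hmin : IsMinOn (fun t : ℝ ↦ cubicModel G H σ (-(t • G))) (Set.Ici 0) α) :
    max ((1 / 12) * ‖-(α • G)‖ ^ 2 * (√(K ^ 2 + 4 * σ * ‖G‖) - K))
        ((‖G‖ / (2 * √3)) * min (‖G‖ / K) √(‖G‖ / σ)) ≤
      -cubicModel G H σ (-(α • G)) := by
  obtain rfl | hG := eq_or_ne G 0
  · simp [cubicModel]
  have hradial := isMinOn_radialCubic_of_isMinOn_cubicModel hG hα hmin
  rw [cubicModel_neg_smul G H σ hα, norm_neg, norm_smul_of_nonneg hα]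
  refine max_le (sq_mul_sqrt_sub_le_neg_radialCubic (norm_nonneg G) hK.le hHK hσ.le
    (by positivity) hradial) ?_
  have half_three_le_sqrt : 3 / 2 ≤ √3 := Real.le_sqrt_of_sq_le (by norm_num)
  calc ‖G‖ / (2 * √3) * min (‖G‖ / K) √(‖G‖ / σ) ≤ ‖G‖ / 3 * min (‖G‖ / K) √(‖G‖ / σ) := by
        gcongr
        linarith
    _ ≤ _ := third_mul_min_le_neg_radialCubic (norm_nonneg G) hK hHK hσ hradial

end CubicModel

/-- Inequality (2) of Lemma 3.1: the Cauchy-point decrease bound. -/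
theorem cauchy_point_decrease
    {E : Type*} [NormedAddCommGroup E] [InnerProductSpace ℝ E] [FiniteDimensional ℝ E]
    (G : E) (hG : G ≠ 0) (H : E →L[ℝ] E) (hH : IsSelfAdjoint H)
    (K_H : ℝ) (hK : 0 < K_H) (hHK : ‖H‖ ≤ K_H)
    (σ : ℝ) (hσ : 0 < σ)
    (m : E → ℝ)
    (hm : ∀ ξ : E, m ξ = ⟪G, ξ⟫ + (1 / 2) * ⟪H ξ, ξ⟫ + (σ / 3) * ‖ξ‖ ^ 3)
    (α : ℝ) (hα : 0 ≤ α)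
    (hmin : ∀ t : ℝ, 0 ≤ t → m (-(α • G)) ≤ m (-(t • G)))
    (ηC : E) (hηC : ηC = -(α • G)) :
    -m ηC ≥
      max ((1 / 12) * ‖ηC‖ ^ 2 * (Real.sqrt (K_H ^ 2 + 4 * σ * ‖G‖) - K_H))
        ((‖G‖ / (2 * Real.sqrt 3)) * min (‖G‖ / K_H) (Real.sqrt (‖G‖ / σ))) := by
  obtain rfl : m = cubicModel G H σ := funext hm
  have hcurv : H.rayleighQuotient G ≤ K_H :=
    (le_of_abs_le (H.rayleighQuotient_le_norm G)).trans hHK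
  exact hηC ▸ cauchy_point_decrease_general hK hcurv hσ hα (isMinOn_iff.2 hmin)
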